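/- Under assumptions (I1)–(I4), the Nehari–Pankov set NP_λ is nonempty and contains every nonzero critical point of J_λ (i.e. every u ∈ E∖{0} with J_λ′(u) = 0 in E′). Moreover c_λ := inf_{u ∈ NP_λ} J_λ(u) = inf_{u ∈ E∖E_n} sup_{w ∈ F_n(u)⁺} J_λ(w) > 0, this infimum over NP_λ is attained, and every minimizer of J_λ on NP_λ is a critical point of J_λ. -/

import Mathlib

open Filter Topology Set
open scoped InnerProductSpace

/- Abstract setting: `E = D(A^{1/2})` is a real Hilbert space in which the rescaled
eigenfunctions `ζ_k / √(1+λ_k)` form a Hilbert basis (encoded by `hON` and `hdense` below);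
the `H`-inner product of `u, v ∈ E` is recovered as `∑ₖ ⟨u,ζ_k⟩_H ⟨v,ζ_k⟩_H`, where
`⟨u,ζ_k⟩_H = ⟨u,ζ_k⟩_E / (1+λ_k)`. -/

variable {E : Type*} [NormedAddCommGroup E] [InnerProductSpace ℝ E] [CompleteSpace E]

/-- The `H`-inner-product coefficient `⟨u, ζ_k⟩_H = ⟨u, ζ_k⟩_E / (1 + λ_k)`. -/
noncomputable def coefH (lam : ℕ → ℝ) (ζ : ℕ → E) (u : E) (k : ℕ) : ℝ :=
  ⟪u, ζ k⟫_ℝ / (1 + lam k)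

/-- The square of the `H`-norm: `‖u‖_H² = ∑ₖ ⟨u,ζ_k⟩_H²`. -/
noncomputable def normHsq (lam : ℕ → ℝ) (ζ : ℕ → E) (u : E) : ℝ :=
  ∑' k, (coefH lam ζ u k) ^ 2

/-- The symmetric bilinear form `q_λ(u,v) = ∑ₖ (λ_k − λ) ⟨u,ζ_k⟩_H ⟨v,ζ_k⟩_H`. -/
noncomputable def qForm (lam : ℕ → ℝ) (ζ : ℕ → E) (lambda : ℝ) (u v : E) : ℝ :=
  ∑' k, (lam k - lambda) * (coefH lam ζ u k * coefH lam ζ v k)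

/-- The action functional `J_λ(u) = ½ q_λ(u) − I(u)`. -/
noncomputable def Jfun (lam : ℕ → ℝ) (ζ : ℕ → E) (I : E → ℝ) (lambda : ℝ) (u : E) : ℝ :=
  qForm lam ζ lambda u u / 2 - I u

/-- `E_n`, the span of the eigenfunctions `ζ_0, …, ζ_n` (the first `n+1` of them). -/
noncomputable def Esub (ζ : ℕ → E) (n : ℕ) : Submodule ℝ E :=
  Submodule.span ℝ (ζ '' {k : ℕ | k ≤ n})

/-- `F_n(u) = E_n ⊕ ℝ u`. -/
noncomputable def Fsub (ζ : ℕ → E) (n : ℕ) (u : E) : Submodule ℝ E :=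
  Esub ζ n ⊔ Submodule.span ℝ {u}

/-- `F_n(u)⁺ = E_n ⊕ ℝ⁺ u = {v + t u : v ∈ E_n, t > 0}`. -/
def FsubPlus (ζ : ℕ → E) (n : ℕ) (u : E) : Set E :=
  {w | ∃ v ∈ Esub ζ n, ∃ t : ℝ, 0 < t ∧ w = v + t • u}

/-- The derivative of `J_λ` at `u` applied to `w`: `J_λ'(u)[w] = q_λ(u,w) − I'(u)[w]`. -/
noncomputable def Jderiv (lam : ℕ → ℝ) (ζ : ℕ → E) (I' : E → E →L[ℝ] ℝ)
    (lambda : ℝ) (u w : E) : ℝ :=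
  qForm lam ζ lambda u w - I' u w

/-- The Nehari–Pankov set `NP_λ = {u ∈ E ∖ E_n : J_λ'(u)|_{F_n(u)} = 0}`. -/
def NehariPankov (lam : ℕ → ℝ) (ζ : ℕ → E) (I' : E → E →L[ℝ] ℝ)
    (n : ℕ) (lambda : ℝ) : Set E :=
  {u | u ∉ Esub ζ n ∧ ∀ w ∈ Fsub ζ n u, Jderiv lam ζ I' lambda u w = 0}

/-- The ground-state level `c_λ = inf_{NP_λ} J_λ`. -/
noncomputable def clevel (lam : ℕ → ℝ) (ζ : ℕ → E) (I : E → ℝ) (I' : E → E →L[ℝ] ℝ)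
    (n : ℕ) (lambda : ℝ) : ℝ :=
  sInf (Jfun lam ζ I lambda '' NehariPankov lam ζ I' n lambda)

/-- The set `Q_λ` of minimizers of `J_λ` on `NP_λ`. -/
def Qset (lam : ℕ → ℝ) (ζ : ℕ → E) (I : E → ℝ) (I' : E → E →L[ℝ] ℝ)
    (n : ℕ) (lambda : ℝ) : Set E :=
  {u | u ∈ NehariPankov lam ζ I' n lambda ∧
    Jfun lam ζ I lambda u = clevel lam ζ I I' n lambda}

/-- `E_n^⊥ = {w ∈ E : ⟨w, ζ_k⟩_H = 0 for k = 0, …, n}`. -/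
def EsubPerp (lam : ℕ → ℝ) (ζ : ℕ → E) (n : ℕ) : Set E :=
  {w | ∀ k ≤ n, coefH lam ζ w k = 0}

/- Write `q_λ = B` and `V = E_n`. The form `B` is negative definite on `V` and coercive on `Vᗮ`:
in the basis `ζ_k / √(1+λ_k)` it is diagonal with entries `1 - (1+λ)/(1+λ_k)`, which increase in `k`
and change sign between `k = n` and `k = n + 1`.

For `v ∈ V` and a Nehari–Pankov point `u`, the difference `J(v + (1+s)u) - J(u)` is `B(v,v)/2` plus
the left-hand side of (I4), so `u` is the unique maximum of `J` on `V ⊕ ℝ⁺u`. Conversely (I3) makes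
`J` negative at infinity in `V ⊕ ℝu` and positive somewhere on `V ⊕ ℝ⁺u`, so every half-space has
such a maximum. A minimizing sequence corresponds to half-spaces directed by unit vectors of `Vᗮ`;
coercivity and the weak continuity of `I` keep a weak limit `a` of these from vanishing, and lower
semicontinuity bounds `J` on `V ⊕ ℝ⁺a` by the infimum. -/

section WeakConvergence

variable {X : Type*} [NormedAddCommGroup X] [NormedSpace ℝ X]

/-- Weak convergence of a sequence, tested against all continuous linear functionals. -/
def TendstoWeakly (x : ℕ → X) (a : X) : Prop :=
  ∀ φ : X →L[ℝ] ℝ, Tendsto (fun j => φ (x j)) atTop (𝓝 (φ a))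

/-- Continuity along weakly convergent sequences, the strong continuity (I1) of the paper. -/
def WeaklySeqContinuous (I : X → ℝ) : Prop :=
  ∀ (x : ℕ → X) (a : X), TendstoWeakly x a → Tendsto (fun j => I (x j)) atTop (𝓝 (I a))

lemma TendstoWeakly.const_add_smul {x : ℕ → X} {a : X} (h : TendstoWeakly x a) (v : X) (t : ℝ) :
    TendstoWeakly (fun j => v + t • x j) (v + t • a) := fun φ => by
  simpa only [map_add, map_smul] using ((h φ).const_smul t).const_add (φ v)

end WeakConvergence

section WeakCompactness

variable {X : Type*} [NormedAddCommGroup X] [InnerProductSpace ℝ X]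

lemma TendstoWeakly.mem_orthogonal {x : ℕ → X} {a : X} (h : TendstoWeakly x a)
    {V : Submodule ℝ X} (hx : ∀ j, x j ∈ Vᗮ) : a ∈ Vᗮ := fun v hv =>
  tendsto_nhds_unique (h (innerSL ℝ v)) (tendsto_const_nhds.congr fun j => (hx j v hv).symm)

lemma exists_subseq_tendstoWeakly_of_separable [CompleteSpace X]
    [TopologicalSpace.SeparableSpace X] {x : ℕ → X} {R : ℝ} (hx : ∀ j, ‖x j‖ ≤ R) :
    ∃ a : X, ∃ φ : ℕ → ℕ, StrictMono φ ∧ TendstoWeakly (x ∘ φ) a := by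
  let toDual := InnerProductSpace.toDual ℝ X
  obtain ⟨a, -, φ, hφ, hlim⟩ := WeakDual.isSeqCompact_closedBall ℝ X 0 R
    (x := fun j => StrongDual.toWeakDual (toDual (x j))) fun j => by simpa [toDual] using hx j
  refine ⟨toDual.symm (WeakDual.toStrongDual a), φ, hφ, fun f => ?_⟩
  obtain ⟨z, rfl⟩ := toDual.surjective f
  have hz : ∀ y, toDual z y = toDual y z := fun y => real_inner_comm y z
  have hlim_z := ((WeakDual.eval_continuous (𝕜 := ℝ) z).tendsto a).comp hlim
  simp only [hz, LinearIsometryEquiv.apply_symm_apply]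
  exact hlim_z

lemma exists_subseq_tendstoWeakly [CompleteSpace X] {x : ℕ → X} {R : ℝ} (hx : ∀ j, ‖x j‖ ≤ R) :
    ∃ a : X, ∃ φ : ℕ → ℕ, StrictMono φ ∧ TendstoWeakly (x ∘ φ) a := by
  let K : Submodule ℝ X := (Submodule.span ℝ (range x)).topologicalClosure
  have hxK : ∀ j, x j ∈ K := fun j =>
    Submodule.le_topologicalClosure _ (Submodule.subset_span (mem_range_self j))
  have hK : TopologicalSpace.IsSeparable (K : Set X) := (countable_range x).isSeparable.span.closure
  have : TopologicalSpace.SeparableSpace K := hK.separableSpace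
  have : CompleteSpace K := (Submodule.isClosed_topologicalClosure _).completeSpace_coe
  obtain ⟨a, φ, hφ, ha⟩ := exists_subseq_tendstoWeakly_of_separable
    (x := fun j => (⟨x j, hxK j⟩ : K)) (R := R) hx
  exact ⟨a, φ, hφ, fun f => ha (f.comp K.subtypeL)⟩

end WeakCompactness

section HalfSpace

variable {X : Type*} [AddCommGroup X] [Module ℝ X] {V : Submodule ℝ X} {u w : X}

lemma add_smul_ne_zero_of_notMem (hu : u ∉ V) {x : V × ℝ} (hx : x ≠ 0) :
    (x.1 : X) + x.2 • u ≠ 0 := by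
  intro h
  have ht : x.2 = 0 := by
    by_contra ht
    refine hu ((V.smul_mem_iff ht).1 ?_)
    rw [eq_neg_of_add_eq_zero_right h]
    exact V.neg_mem x.1.2
  have hv : x.1 = 0 := by simpa [ht] using h
  exact hx (Prod.ext hv ht)

/-- The open half-space `V ⊕ ℝ⁺u` of `V ⊕ ℝu`; `FsubPlus ζ n u` is the case `V = Esub ζ n`. -/
def openHalfSpace (V : Submodule ℝ X) (u : X) : Set X :=
  {w | ∃ v ∈ V, ∃ t : ℝ, 0 < t ∧ w = v + t • u}

lemma self_mem_openHalfSpace : u ∈ openHalfSpace V u :=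
  ⟨0, V.zero_mem, 1, one_pos, by module⟩

lemma notMem_of_mem_openHalfSpace (hu : u ∉ V) (hw : w ∈ openHalfSpace V u) : w ∉ V := by
  obtain ⟨v, hv, t, ht, rfl⟩ := hw
  rwa [V.add_mem_iff_right hv, V.smul_mem_iff ht.ne']

lemma openHalfSpace_subset_of_mem (hw : w ∈ openHalfSpace V u) :
    openHalfSpace V w ⊆ openHalfSpace V u := by
  obtain ⟨v, hv, t, ht, rfl⟩ := hw
  rintro _ ⟨v', hv', t', ht', rfl⟩
  exact ⟨v' + t' • v, V.add_mem hv' (V.smul_mem _ hv), t' * t, mul_pos ht' ht, by module⟩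

lemma openHalfSpace_eq_of_mem (hw : w ∈ openHalfSpace V u) :
    openHalfSpace V w = openHalfSpace V u := by
  refine (openHalfSpace_subset_of_mem hw).antisymm (openHalfSpace_subset_of_mem ?_)
  obtain ⟨v, hv, t, ht, rfl⟩ := hw
  refine ⟨-(t⁻¹ • v), V.neg_mem (V.smul_mem _ hv), t⁻¹, inv_pos.2 ht, ?_⟩
  rw [smul_add, inv_smul_smul₀ ht.ne', neg_add_cancel_left]

lemma eventually_add_smul_mem_openHalfSpace (hw : w ∈ openHalfSpace V u) {z : X}
    (hz : z ∈ V ⊔ Submodule.span ℝ {w}) : ∀ᶠ s : ℝ in 𝓝 0, w + s • z ∈ openHalfSpace V u := by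
  rw [← openHalfSpace_eq_of_mem hw]
  obtain ⟨v, hv, _, hcw, rfl⟩ := Submodule.mem_sup.1 hz
  obtain ⟨c, rfl⟩ := Submodule.mem_span_singleton.1 hcw
  have hcont : Continuous fun s : ℝ => 1 + s * c := by fun_prop
  filter_upwards [(hcont.tendsto 0).eventually_const_lt (show (0 : ℝ) < 1 + 0 * c by simp)]
    with s hs
  exact ⟨s • v, V.smul_mem _ hv, 1 + s * c, hs, by module⟩

end HalfSpace

section Energy

variable {X : Type*} [NormedAddCommGroup X] [NormedSpace ℝ X]
  {B : X →L[ℝ] X →L[ℝ] ℝ} {I : X → ℝ} {I' : X → X →L[ℝ] ℝ}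

/-- The functional `J(u) = ½ B(u,u) − I(u)`; `Jfun` is the case of the form `q_λ`. -/
noncomputable def energy (B : X →L[ℝ] X →L[ℝ] ℝ) (I : X → ℝ) (u : X) : ℝ :=
  B u u / 2 - I u

lemma energy_smul (t : ℝ) (w : X) : energy B I (t • w) = t ^ 2 * (B w w / 2) - I (t • w) := by
  simp only [energy, map_smul, smul_apply, smul_eq_mul]
  ring

lemma continuous_energy (hI : Continuous I) : Continuous (energy B I) := by
  unfold energy
  fun_prop

lemma hasFDerivAt_energy (hsymm : ∀ u v, B u v = B v u) {u : X} (hI : HasFDerivAt I (I' u) u) :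
    HasFDerivAt (energy B I) (B u - I' u) u := by
  have hquad : HasFDerivAt (fun u => B u u / 2) (B u) u := by
    refine (((B.hasFDerivAt (x := u)).clm_apply (hasFDerivAt_id u)).mul_const (1 / 2 : ℝ)
      |>.congr_fderiv ?_).congr_of_eventuallyEq (.of_forall fun v => ?_)
    · ext w
      simp [hsymm w u]
      ring
    · simp [div_eq_mul_inv]
  exact hquad.sub hI

lemma eventually_add_smul_lt_of_hasStrictFDerivAt {f : X → ℝ} {f' : X →L[ℝ] ℝ} {u p : X}
    (hf : HasStrictFDerivAt f f' u) (hp : f' p < 0) :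
    ∀ᶠ y : X × ℝ in 𝓝 u ×ˢ 𝓝[>] 0, f (y.1 + y.2 • p) < f y.1 := by
  have hc : 0 < -f' p / (‖p‖ + 1) := div_pos (neg_pos.2 hp) (by positivity)
  have hfst : Tendsto Prod.fst (𝓝 u ×ˢ 𝓝[>] (0 : ℝ)) (𝓝 u) := tendsto_fst
  have hsnd : Tendsto Prod.snd (𝓝 u ×ˢ 𝓝[>] (0 : ℝ)) (𝓝 0) :=
    tendsto_snd.mono_right nhdsWithin_le_nhds
  have hpair : Tendsto (fun y : X × ℝ => (y.1 + y.2 • p, y.1)) (𝓝 u ×ˢ 𝓝[>] 0) (𝓝 (u, u)) := by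
    simpa using (hfst.add (hsnd.smul_const p)).prodMk_nhds hfst
  filter_upwards [hpair.eventually (hf.isLittleO.def hc),
    tendsto_snd.eventually self_mem_nhdsWithin] with ⟨y, s⟩ hlin (hs : 0 < s)
  simp only [add_sub_cancel_left, map_smul, smul_eq_mul, norm_smul, Real.norm_of_nonneg hs.le]
    at hlin
  have herr : -f' p / (‖p‖ + 1) * ‖p‖ < -f' p := by
    rw [div_mul_eq_mul_div, div_lt_iff₀ (by positivity)]
    linarith
  have hlt : -f' p / (‖p‖ + 1) * (s * ‖p‖) < s * -f' p := by
    rw [mul_left_comm]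
    gcongr
  linarith [(Real.le_norm_self _).trans hlin]

/-- The Nehari–Pankov set of the functional `½ B(u,u) − I(u)` relative to `V`. -/
def nehariPankovSet (B : X →L[ℝ] X →L[ℝ] ℝ) (V : Submodule ℝ X) (I' : X → X →L[ℝ] ℝ) : Set X :=
  {u | u ∉ V ∧ ∀ w ∈ V ⊔ Submodule.span ℝ {u}, B u w - I' u w = 0}

/-- The superquadraticity assumptions (I2) and (I3) on the nonlinearity. -/
structure IsSuperquadratic (I : X → ℝ) : Prop where
  map_zero : I 0 = 0
  pos : ∀ u ≠ 0, 0 < I u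
  monotoneOn : ∀ u ≠ 0, MonotoneOn (fun t : ℝ => I (t • u) / t ^ 2) (Ioi 0)
  tendsto_zero : ∀ u ≠ 0, Tendsto (fun t : ℝ => I (t • u) / t ^ 2) (𝓝[>] 0) (𝓝 0)
  tendsto_atTop : ∀ u ≠ 0, Tendsto (fun t : ℝ => I (t • u) / t ^ 2) atTop atTop

/-- The inequality (I4), which makes every point of the Nehari–Pankov set the global maximum of
the functional on its open half-space. -/
structure PankovInequality (I : X → ℝ) (I' : X → X →L[ℝ] ℝ) : Prop where
  le : ∀ u ≠ 0, ∀ (v : X) (s : ℝ), -1 ≤ s →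
    I u - I ((1 + s) • u + v) + I' u ((s * (s / 2 + 1)) • u + (1 + s) • v) ≤ 0
  lt : ∀ u ≠ 0, ∀ s : ℝ, -1 ≤ s → s ≠ 0 →
    I u - I ((1 + s) • u) + I' u ((s * (s / 2 + 1)) • u) < 0

lemma mem_nehariPankovSet_of_isMaxOn {V : Submodule ℝ X} {u w : X}
    (hsymm : ∀ u v, B u v = B v u) (hI : HasFDerivAt I (I' w) w) (hu : u ∉ V)
    (hw : w ∈ openHalfSpace V u) (hmax : IsMaxOn (energy B I) (openHalfSpace V u) w) :
    w ∈ nehariPankovSet B V I' := by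
  refine ⟨notMem_of_mem_openHalfSpace hu hw, fun z hz => ?_⟩
  have hline : HasDerivAt (fun s : ℝ => w + s • z) z 0 := by
    simpa using ((hasDerivAt_id (0 : ℝ)).smul_const z).const_add w
  have hJ : HasFDerivAt (energy B I) (B w - I' w) (w + (0 : ℝ) • z) := by
    simpa using hasFDerivAt_energy hsymm hI
  have hderiv := hJ.comp_hasDerivAt (0 : ℝ) hline
  refine IsLocalMax.hasDerivAt_eq_zero ?_ hderiv
  filter_upwards [eventually_add_smul_mem_openHalfSpace hw hz] with s hs
  simpa using hmax hs

lemma energy_add_smul_eq {V : Submodule ℝ X} {u v : X} (hsymm : ∀ u v, B u v = B v u)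
    (hu : u ∈ nehariPankovSet B V I') (hv : v ∈ V) (s : ℝ) :
    energy B I (v + (1 + s) • u) = energy B I u + B v v / 2 +
      (I u - I ((1 + s) • u + v) + I' u ((s * (s / 2 + 1)) • u + (1 + s) • v)) := by
  have huv : B u v = I' u v := sub_eq_zero.1 (hu.2 v (Submodule.mem_sup_left hv))
  have huu : B u u = I' u u :=
    sub_eq_zero.1 (hu.2 u (Submodule.mem_sup_right (Submodule.mem_span_singleton_self u)))
  simp only [energy, add_comm v, map_add, map_smul, add_apply, smul_apply, smul_eq_mul, hsymm v u,
    ← huv, ← huu]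
  ring

lemma eventually_energy_smul_neg (hI : IsSuperquadratic I) (hcont : Continuous I) {y : X}
    (hy : y ≠ 0) : ∀ᶠ p : X × ℝ in 𝓝 y ×ˢ atTop, energy B I (p.2 • p.1) < 0 := by
  obtain ⟨M, hM_pos, hM⟩ := ((eventually_gt_atTop (0 : ℝ)).and
    ((hI.tendsto_atTop y hy).eventually_gt_atTop (B y y / 2))).exists
  have hquot : Continuous fun z : X => B z z / 2 - I (M • z) / M ^ 2 := by fun_prop
  have hnear := (hquot.tendsto y).eventually_lt_const (sub_neg.2 hM)
  filter_upwards [(hnear.and (eventually_ne_nhds hy)).prod_mk (eventually_ge_atTop M)]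
    with ⟨z, r⟩ ⟨⟨hz, hz_ne⟩, hr⟩
  have hr_pos : 0 < r := hM_pos.trans_le hr
  have hmono : I (M • z) / M ^ 2 ≤ I (r • z) / r ^ 2 := hI.monotoneOn z hz_ne hM_pos hr_pos hr
  calc energy B I (r • z) = r ^ 2 * (B z z / 2 - I (r • z) / r ^ 2) := by
        rw [energy_smul]
        field_simp
    _ < 0 := mul_neg_of_pos_of_neg (pow_pos hr_pos 2) (by linarith)

lemma exists_eventually_energy_neg_of_le_norm {V : Submodule ℝ X} [FiniteDimensional ℝ V] {u : X}
    (hI : IsSuperquadratic I) (hcont : Continuous I) (hu : u ∉ V) :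
    ∃ R : ℝ, ∀ᶠ u' in 𝓝 u, ∀ x : V × ℝ, R ≤ ‖x‖ → energy B I (x.1 + x.2 • u') < 0 := by
  have : ProperSpace (V × ℝ) := FiniteDimensional.proper ℝ (V × ℝ)
  have hsphere : ∀ᶠ q : (X × ℝ) × (V × ℝ) in (𝓝 u ×ˢ atTop) ×ˢ 𝓝ˢ (Metric.sphere (0 : V × ℝ) 1),
      energy B I (q.1.2 • ((q.2.1 : X) + q.2.2 • q.1.1)) < 0 := by
    refine (isCompact_sphere 0 1).mem_prod_nhdsSet_of_forall fun x hx => ?_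
    have hmap : Tendsto (fun q : (X × ℝ) × (V × ℝ) => (q.2.1 : X) + q.2.2 • q.1.1)
        ((𝓝 u ×ˢ atTop) ×ˢ 𝓝 x) (𝓝 (x.1 + x.2 • u)) := by
      have hjoint : Continuous fun q : X × (V × ℝ) => (q.2.1 : X) + q.2.2 • q.1 := by fun_prop
      exact (hjoint.tendsto (u, x)).comp
        ((tendsto_fst.comp tendsto_fst).prodMk_nhds tendsto_snd)
    exact (hmap.prodMk (tendsto_snd.comp tendsto_fst)).eventually
      (eventually_energy_smul_neg hI hcont
        (add_smul_ne_zero_of_notMem hu (ne_zero_of_mem_unit_sphere ⟨x, hx⟩)))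
  obtain ⟨P, hP, Q, hQ, hPQ⟩ := eventually_prod_iff.1
    (hsphere.curry.mono fun _ h => h.self_of_nhdsSet)
  obtain ⟨R, hR⟩ := eventually_atTop.1 hQ
  refine ⟨max R 1, hP.mono fun u' hu' x hx => ?_⟩
  have hx_pos : 0 < ‖x‖ := one_pos.trans_le ((le_max_right R 1).trans hx)
  have hunit : ‖x‖⁻¹ • x ∈ Metric.sphere (0 : V × ℝ) 1 :=
    mem_sphere_zero_iff_norm.2 (norm_smul_inv_norm (norm_pos_iff.1 hx_pos))
  have hneg := hPQ hu' (hR ‖x‖ ((le_max_left R 1).trans hx)) _ hunit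
  have hscale : ‖x‖ • ((‖x‖⁻¹ • x).1 + (‖x‖⁻¹ • x).2 • u') = (x.1 : X) + x.2 • u' := by
    simp only [Prod.smul_fst, Prod.smul_snd, Submodule.coe_smul, smul_assoc, ← smul_add,
      smul_inv_smul₀ hx_pos.ne']
  rwa [hscale] at hneg

end Energy

section SplitForm

variable {X : Type*} [NormedAddCommGroup X] [InnerProductSpace ℝ X] {V : Submodule ℝ X}
  {B : X →L[ℝ] X →L[ℝ] ℝ} {I : X → ℝ} {I' : X → X →L[ℝ] ℝ} {u : X}

/-- A symmetric form that is negative definite on `V` and coercive on `Vᗮ`, as `q_λ` is for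
`V = E_n` and `λ_n < λ < λ_{n+1}`. -/
structure IsSplitForm (B : X →L[ℝ] X →L[ℝ] ℝ) (V : Submodule ℝ X) : Prop where
  symm : ∀ u v, B u v = B v u
  neg : ∀ v ∈ V, v ≠ 0 → B v v < 0
  coercive : ∃ δ > 0, ∀ w ∈ Vᗮ, δ * ‖w‖ ^ 2 ≤ B w w

lemma IsSplitForm.apply_self_nonpos (hB : IsSplitForm B V) {v : X} (hv : v ∈ V) : B v v ≤ 0 := by
  rcases eq_or_ne v 0 with rfl | hv_ne
  · simp
  · exact (hB.neg v hv hv_ne).le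

lemma IsSplitForm.apply_self_nonneg (hB : IsSplitForm B V) {w : X} (hw : w ∈ Vᗮ) : 0 ≤ B w w := by
  obtain ⟨δ, hδ, hcoer⟩ := hB.coercive
  exact (by positivity : 0 ≤ δ * ‖w‖ ^ 2).trans (hcoer w hw)

lemma energy_nonpos_of_mem (hB : IsSplitForm B V) (hI : IsSuperquadratic I) {v : X} (hv : v ∈ V) :
    energy B I v ≤ 0 := by
  have hI_nonneg : 0 ≤ I v := by
    rcases eq_or_ne v 0 with rfl | hv_ne
    · exact hI.map_zero.ge
    · exact (hI.pos v hv_ne).le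
  unfold energy
  linarith [hB.apply_self_nonpos hv]

lemma energy_add_smul_le_of_mem_nehariPankovSet (hB : IsSplitForm B V) (hP : PankovInequality I I')
    (hu : u ∈ nehariPankovSet B V I') {v : X} (hv : v ∈ V) {t : ℝ} (ht : 0 ≤ t) :
    energy B I (v + t • u) ≤ energy B I u := by
  have hu_ne : u ≠ 0 := fun h => hu.1 (h ▸ V.zero_mem)
  have heq := energy_add_smul_eq (I := I) hB.symm hu hv (t - 1)
  rw [add_sub_cancel] at heq
  have hle := hP.le u hu_ne v (t - 1) (by linarith)
  rw [add_sub_cancel] at hle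
  linarith [hB.apply_self_nonpos hv]

lemma eq_zero_and_eq_one_of_energy_le (hB : IsSplitForm B V) (hP : PankovInequality I I')
    (hu : u ∈ nehariPankovSet B V I') {v : X} (hv : v ∈ V) {t : ℝ} (ht : 0 ≤ t)
    (hle : energy B I u ≤ energy B I (v + t • u)) : v = 0 ∧ t = 1 := by
  have hu_ne : u ≠ 0 := fun h => hu.1 (h ▸ V.zero_mem)
  obtain ⟨s, rfl⟩ : ∃ s, t = 1 + s := ⟨t - 1, by ring⟩
  have hs : -1 ≤ s := by linarith
  rw [energy_add_smul_eq hB.symm hu hv] at hle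
  have hv_zero : v = 0 := by
    by_contra hv_ne
    linarith [hB.neg v hv hv_ne, hP.le u hu_ne v s hs]
  subst hv_zero
  refine ⟨rfl, ?_⟩
  by_contra hs_ne
  have hlt := hP.lt u hu_ne s hs (by simpa using hs_ne)
  simp only [map_zero, zero_div, add_zero, smul_zero] at hle
  linarith

lemma isMaxOn_openHalfSpace_of_mem_nehariPankovSet (hB : IsSplitForm B V)
    (hP : PankovInequality I I') (hu : u ∈ nehariPankovSet B V I') :
    IsMaxOn (energy B I) (openHalfSpace V u) u := by
  rintro _ ⟨v, hv, t, ht, rfl⟩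
  exact energy_add_smul_le_of_mem_nehariPankovSet hB hP hu hv ht.le

lemma mem_nehariPankovSet_of_critical (hB : IsSplitForm B V) (hI : IsSuperquadratic I)
    (hP : PankovInequality I I') (hu : u ≠ 0) (hcrit : ∀ v, B u v - I' u v = 0) :
    u ∈ nehariPankovSet B V I' := by
  refine ⟨fun hmem => ?_, fun w _ => hcrit w⟩
  have hlt := hP.lt u hu (-1) le_rfl (by norm_num)
  simp only [add_neg_cancel, zero_smul, hI.map_zero, map_smul, smul_eq_mul] at hlt
  linarith [hI.pos u hu, hB.apply_self_nonpos hmem, hcrit u]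

lemma exists_unit_mem_orthogonal_mem_openHalfSpace [V.HasOrthogonalProjection] (hu : u ∉ V) :
    ∃ w ∈ Vᗮ, ‖w‖ = 1 ∧ w ∈ openHalfSpace V u := by
  let z := u - V.starProjection u
  have hz : z ≠ 0 := fun h => hu (sub_eq_zero.1 h ▸ V.starProjection_apply_mem u)
  refine ⟨‖z‖⁻¹ • z, Vᗮ.smul_mem _ (V.sub_starProjection_mem_orthogonal u),
    norm_smul_inv_norm hz, -(‖z‖⁻¹ • V.starProjection u),
    V.neg_mem (V.smul_mem _ (V.starProjection_apply_mem u)), ‖z‖⁻¹,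
    inv_pos.2 (norm_pos_iff.2 hz), ?_⟩
  module

lemma exists_energy_smul_pos (hB : IsSplitForm B V) (hI : IsSuperquadratic I) {w : X}
    (hw : w ∈ Vᗮ) (hw_ne : w ≠ 0) : ∃ t : ℝ, 0 < t ∧ 0 < energy B I (t • w) := by
  obtain ⟨δ, hδ, hcoer⟩ := hB.coercive
  have hBw : 0 < B w w / 2 := half_pos
    ((mul_pos hδ (pow_pos (norm_pos_iff.2 hw_ne) 2)).trans_le (hcoer w hw))
  obtain ⟨t, hIt, ht⟩ := (((hI.tendsto_zero w hw_ne).eventually_lt_const hBw).and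
    self_mem_nhdsWithin).exists
  refine ⟨t, ht, ?_⟩
  rw [energy_smul, sub_pos, mul_comm]
  exact (div_lt_iff₀ (pow_pos ht 2)).1 hIt

lemma exists_mem_openHalfSpace_energy_pos [V.HasOrthogonalProjection] (hB : IsSplitForm B V)
    (hI : IsSuperquadratic I) (hu : u ∉ V) : ∃ w ∈ openHalfSpace V u, 0 < energy B I w := by
  obtain ⟨w, hw, hw_norm, hwu⟩ := exists_unit_mem_orthogonal_mem_openHalfSpace hu
  obtain ⟨t, ht, hpos⟩ := exists_energy_smul_pos hB hI hw (norm_ne_zero_iff.1 (by simp [hw_norm]))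
  exact ⟨t • w, openHalfSpace_subset_of_mem hwu ⟨0, V.zero_mem, t, ht, (zero_add _).symm⟩, hpos⟩

lemma energy_pos_of_mem_nehariPankovSet [V.HasOrthogonalProjection] (hB : IsSplitForm B V)
    (hI : IsSuperquadratic I) (hP : PankovInequality I I') (hu : u ∈ nehariPankovSet B V I') :
    0 < energy B I u := by
  obtain ⟨w, hw, hpos⟩ := exists_mem_openHalfSpace_energy_pos hB hI hu.1
  exact hpos.trans_le (isMaxOn_openHalfSpace_of_mem_nehariPankovSet hB hP hu hw)

lemma exists_isMaxOn_openHalfSpace [FiniteDimensional ℝ V] (hB : IsSplitForm B V)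
    (hI : IsSuperquadratic I) (hcont : Continuous I) (hu : u ∉ V) :
    ∃ w ∈ openHalfSpace V u, IsMaxOn (energy B I) (openHalfSpace V u) w := by
  have : ProperSpace (V × ℝ) := FiniteDimensional.proper ℝ (V × ℝ)
  let f : V × ℝ → ℝ := fun x => energy B I (x.1 + x.2 • u)
  have hf : Continuous f := (continuous_energy hcont).comp (by fun_prop)
  obtain ⟨_, ⟨v₀, hv₀, t₀, ht₀, rfl⟩, hpos⟩ := exists_mem_openHalfSpace_energy_pos hB hI hu
  obtain ⟨R, hR⟩ := exists_eventually_energy_neg_of_le_norm hI hcont hu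
  let S : Set (V × ℝ) := {x | 0 ≤ x.2}
  have hx₀ : (⟨v₀, hv₀⟩, t₀) ∈ S := ht₀.le
  have hfar : ∀ᶠ x in cocompact (V × ℝ) ⊓ 𝓟 S, f x ≤ f (⟨v₀, hv₀⟩, t₀) :=
    ((tendsto_norm_cocompact_atTop.eventually_ge_atTop R).mono fun x hx =>
      (hR.self_of_nhds x hx).le.trans hpos.le).filter_mono inf_le_left
  obtain ⟨⟨v, t⟩, ht, hmax⟩ := hf.continuousOn.exists_isMaxOn'
    (isClosed_le continuous_const continuous_snd) hx₀ hfar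
  have hpos_max : 0 < f (v, t) := hpos.trans_le (hmax hx₀)
  have ht_ne : t ≠ 0 := by
    rintro rfl
    refine hpos_max.not_ge ?_
    simpa [f] using energy_nonpos_of_mem hB hI v.2
  refine ⟨v + t • u, ⟨v, v.2, t, lt_of_le_of_ne ht ht_ne.symm, rfl⟩, ?_⟩
  rintro _ ⟨v', hv', t', ht', rfl⟩
  exact hmax (show (⟨v', hv'⟩, t') ∈ S from ht'.le)

lemma exists_mem_openHalfSpace_mem_nehariPankovSet [FiniteDimensional ℝ V] (hB : IsSplitForm B V)
    (hI : IsSuperquadratic I) (hderiv : ∀ u, HasFDerivAt I (I' u) u) (hu : u ∉ V) :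
    ∃ w ∈ openHalfSpace V u, w ∈ nehariPankovSet B V I' := by
  have hcont : Continuous I := continuous_iff_continuousAt.2 fun u => (hderiv u).continuousAt
  obtain ⟨w, hw, hmax⟩ := exists_isMaxOn_openHalfSpace hB hI hcont hu
  exact ⟨w, hw, mem_nehariPankovSet_of_isMaxOn hB.symm (hderiv w) hu hw hmax⟩

lemma sSup_energy_openHalfSpace (hB : IsSplitForm B V) (hP : PankovInequality I I')
    (hu : u ∈ nehariPankovSet B V I') : sSup (energy B I '' openHalfSpace V u) = energy B I u :=
  IsGreatest.csSup_eq ⟨mem_image_of_mem _ self_mem_openHalfSpace,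
    forall_mem_image.2 (isMaxOn_openHalfSpace_of_mem_nehariPankovSet hB hP hu)⟩

lemma image_sSup_energy_openHalfSpace [FiniteDimensional ℝ V] (hB : IsSplitForm B V)
    (hI : IsSuperquadratic I) (hP : PankovInequality I I')
    (hderiv : ∀ u, HasFDerivAt I (I' u) u) :
    (fun u => sSup (energy B I '' openHalfSpace V u)) '' {u | u ∉ V} =
      energy B I '' nehariPankovSet B V I' := by
  apply Subset.antisymm
  · rintro _ ⟨u, hu, rfl⟩
    obtain ⟨w, hwu, hw⟩ := exists_mem_openHalfSpace_mem_nehariPankovSet hB hI hderiv hu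
    refine ⟨w, hw, ?_⟩
    rw [← sSup_energy_openHalfSpace hB hP hw, openHalfSpace_eq_of_mem hwu]
  · rintro _ ⟨u, hu, rfl⟩
    exact ⟨u, hu.1, sSup_energy_openHalfSpace hB hP hu⟩

lemma energy_le_of_tendstoWeakly {y : ℕ → X} {a : X} {s : ℕ → ℝ} {c : ℝ}
    (hsymm : ∀ u v, B u v = B v u) (hweak : WeaklySeqContinuous I) (hy : TendstoWeakly y a)
    (hnonneg : ∀ j, 0 ≤ B (y j - a) (y j - a)) (hle : ∀ j, energy B I (y j) ≤ s j)
    (hs : Tendsto s atTop (𝓝 c)) : energy B I a ≤ c := by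
  have hlim : Tendsto (fun j => B a (y j) - B a a / 2 - I (y j)) atTop (𝓝 (energy B I a)) := by
    have := ((hy (B a)).sub_const (B a a / 2)).sub (hweak y a hy)
    rwa [sub_half] at this
  refine le_of_tendsto_of_tendsto' hlim hs fun j => ?_
  have hexpand := hnonneg j
  simp only [map_sub, sub_apply, hsymm (y j) a] at hexpand
  have := hle j
  unfold energy at this
  linarith

lemma ne_zero_of_tendstoWeakly_of_energy_smul_le {w : ℕ → X} {a : X} {s : ℕ → ℝ} {c : ℝ}
    (hB : IsSplitForm B V) (hI_zero : I 0 = 0) (hweak : WeaklySeqContinuous I)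
    (hwa : TendstoWeakly w a) (hw : ∀ j, w j ∈ Vᗮ) (hw_norm : ∀ j, ‖w j‖ = 1)
    (hle : ∀ j, ∀ t : ℝ, 0 < t → energy B I (t • w j) ≤ s j) (hs : Tendsto s atTop (𝓝 c)) :
    a ≠ 0 := by
  rintro rfl
  obtain ⟨δ, hδ, hcoer⟩ := hB.coercive
  have hbound : ∀ t : ℝ, 0 < t → t ^ 2 * (δ / 2) ≤ c := by
    intro t ht
    have hIt : Tendsto (fun j => I (t • w j)) atTop (𝓝 0) := by
      simpa [hI_zero] using hweak _ _ (hwa.const_add_smul 0 t)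
    have hlim : Tendsto (fun j => t ^ 2 * (δ / 2) - I (t • w j)) atTop (𝓝 (t ^ 2 * (δ / 2))) := by
      simpa using hIt.const_sub (t ^ 2 * (δ / 2))
    refine le_of_tendsto_of_tendsto' hlim hs fun j => ?_
    have hδw : δ ≤ B (w j) (w j) := by simpa [hw_norm j] using hcoer (w j) (hw j)
    refine le_trans ?_ (hle j t ht)
    rw [energy_smul]
    gcongr
  have hlarge : Tendsto (fun t : ℝ => t ^ 2 * (δ / 2)) atTop atTop :=
    (tendsto_pow_atTop two_ne_zero).atTop_mul_const (half_pos hδ)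
  obtain ⟨t, hlt, ht⟩ := ((hlarge.eventually_gt_atTop c).and (eventually_gt_atTop 0)).exists
  exact hlt.not_ge (hbound t ht)

lemma exists_notMem_forall_energy_le [CompleteSpace X] {w : ℕ → X} {s : ℕ → ℝ} {c : ℝ}
    (hB : IsSplitForm B V) (hI_zero : I 0 = 0) (hweak : WeaklySeqContinuous I)
    (hw : ∀ j, w j ∈ Vᗮ) (hw_norm : ∀ j, ‖w j‖ = 1)
    (hle : ∀ j, ∀ y ∈ openHalfSpace V (w j), energy B I y ≤ s j) (hs : Tendsto s atTop (𝓝 c)) :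
    ∃ a ∉ V, ∀ y ∈ openHalfSpace V a, energy B I y ≤ c := by
  obtain ⟨a, φ, hφ, ha⟩ := exists_subseq_tendstoWeakly fun j => (hw_norm j).le
  have hs_sub : Tendsto (s ∘ φ) atTop (𝓝 c) := hs.comp hφ.tendsto_atTop
  have ha_orth : a ∈ Vᗮ := ha.mem_orthogonal fun j => hw (φ j)
  have ha_ne : a ≠ 0 := ne_zero_of_tendstoWeakly_of_energy_smul_le hB hI_zero hweak ha
    (fun j => hw (φ j)) (fun j => hw_norm (φ j))
    (fun j t ht => hle (φ j) _ ⟨0, V.zero_mem, t, ht, (zero_add _).symm⟩) hs_sub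
  refine ⟨a, fun haV => ha_ne ?_, ?_⟩
  · exact V.orthogonal_disjoint.le_bot ⟨haV, ha_orth⟩
  rintro _ ⟨v, hv, t, ht, rfl⟩
  refine energy_le_of_tendstoWeakly hB.symm hweak (ha.const_add_smul v t) (fun j => ?_)
    (fun j => hle (φ j) _ ⟨v, hv, t, ht, rfl⟩) hs_sub
  rw [add_sub_add_left_eq_sub, ← smul_sub]
  exact hB.apply_self_nonneg (Vᗮ.smul_mem t (Vᗮ.sub_mem (hw (φ j)) ha_orth))

lemma exists_isMinOn_nehariPankovSet [CompleteSpace X] [FiniteDimensional ℝ V]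
    (hB : IsSplitForm B V) (hV : V ≠ ⊤) (hI : IsSuperquadratic I) (hP : PankovInequality I I')
    (hweak : WeaklySeqContinuous I) (hderiv : ∀ u, HasFDerivAt I (I' u) u) :
    ∃ u ∈ nehariPankovSet B V I', IsMinOn (energy B I) (nehariPankovSet B V I') u := by
  let N := nehariPankovSet B V I'
  obtain ⟨u₀, hu₀⟩ : ∃ u, u ∉ V := by
    by_contra! h
    exact hV (V.eq_top_iff'.2 h)
  obtain ⟨z₀, -, hz₀⟩ := exists_mem_openHalfSpace_mem_nehariPankovSet hB hI hderiv hu₀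
  have hbdd : BddBelow (energy B I '' N) :=
    ⟨0, forall_mem_image.2 fun u hu => (energy_pos_of_mem_nehariPankovSet hB hI hP hu).le⟩
  obtain ⟨s, -, hs, hs_mem⟩ := exists_seq_tendsto_sInf ⟨_, mem_image_of_mem (energy B I) hz₀⟩ hbdd
  choose u hu hus using hs_mem
  choose w hw hw_norm hwu using fun j => exists_unit_mem_orthogonal_mem_openHalfSpace (hu j).1
  obtain ⟨a, haV, ha⟩ := exists_notMem_forall_energy_le hB hI.map_zero hweak hw hw_norm
    (fun j y hy => (isMaxOn_openHalfSpace_of_mem_nehariPankovSet hB hP (hu j)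
      (openHalfSpace_subset_of_mem (hwu j) hy)).trans_eq (hus j)) hs
  obtain ⟨z, hza, hz⟩ := exists_mem_openHalfSpace_mem_nehariPankovSet hB hI hderiv haV
  exact ⟨z, hz, fun y hy => (ha z hza).trans (csInf_le hbdd (mem_image_of_mem _ hy))⟩

lemma tendsto_zero_one_of_energy_le [FiniteDimensional ℝ V] {ι : Type*} {l : Filter ι}
    {y : ι → X} {x : ι → V × ℝ} (hB : IsSplitForm B V) (hI : IsSuperquadratic I)
    (hP : PankovInequality I I') (hcont : Continuous I) (hu : u ∈ nehariPankovSet B V I')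
    (hy : Tendsto y l (𝓝 u)) (hx_nonneg : ∀ᶠ j in l, 0 ≤ (x j).2)
    (hle : ∀ᶠ j in l, energy B I (y j) ≤ energy B I ((x j).1 + (x j).2 • y j)) :
    Tendsto x l (𝓝 (0, 1)) := by
  have : ProperSpace (V × ℝ) := FiniteDimensional.proper ℝ (V × ℝ)
  have hJ : Continuous (energy B I) := continuous_energy hcont
  have hJy : Tendsto (fun j => energy B I (y j)) l (𝓝 (energy B I u)) := (hJ.tendsto u).comp hy
  obtain ⟨R, hR⟩ := exists_eventually_energy_neg_of_le_norm hI hcont hu.1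
  have hbounded : ∀ᶠ j in l, x j ∈ Metric.closedBall 0 R := by
    filter_upwards [hJy.eventually_const_lt (energy_pos_of_mem_nehariPankovSet hB hI hP hu),
      hy.eventually hR, hle] with j hpos hneg hlej
    by_contra hfar
    rw [mem_closedBall_zero_iff, not_le] at hfar
    exact (hpos.trans_le hlej).not_gt (hneg (x j) hfar.le)
  refine (isCompact_closedBall 0 R).tendsto_nhds_of_unique_mapClusterPt hbounded
    fun x₀ _ hx₀ => ?_
  obtain ⟨U, hUl, hU⟩ := mapClusterPt_iff_ultrafilter.1 hx₀
  have hsnd : Tendsto (fun j => (x j).2) U (𝓝 x₀.2) := (continuous_snd.tendsto x₀).comp hU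
  have hlim : Tendsto (fun j => ((x j).1 : X) + (x j).2 • y j) U (𝓝 (x₀.1 + x₀.2 • u)) :=
    (((continuous_subtype_val.comp continuous_fst).tendsto x₀).comp hU).add
      (hsnd.smul (hy.mono_left hUl))
  have hle₀ : energy B I u ≤ energy B I (x₀.1 + x₀.2 • u) :=
    le_of_tendsto_of_tendsto (hJy.mono_left hUl) ((hJ.tendsto _).comp hlim) (hle.filter_mono hUl)
  obtain ⟨hfst, hone⟩ := eq_zero_and_eq_one_of_energy_le hB hP hu x₀.1.2
    (ge_of_tendsto hsnd (hx_nonneg.filter_mono hUl)) hle₀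
  exact Prod.ext (Subtype.ext hfst) hone

lemma exists_tendsto_add_smul_mem_nehariPankovSet [FiniteDimensional ℝ V] {ι : Type*}
    {l : Filter ι} {y : ι → X} (hB : IsSplitForm B V) (hI : IsSuperquadratic I)
    (hP : PankovInequality I I') (hderiv : ∀ u, HasFDerivAt I (I' u) u)
    (hu : u ∈ nehariPankovSet B V I') (hy : Tendsto y l (𝓝 u)) :
    ∃ x : ι → V × ℝ, Tendsto x l (𝓝 (0, 1)) ∧
      ∀ᶠ j in l, (x j).1 + (x j).2 • y j ∈ nehariPankovSet B V I' := by
  have hcont : Continuous I := continuous_iff_continuousAt.2 fun u => (hderiv u).continuousAt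
  have hproj : ∀ᶠ j in l, ∃ x : V × ℝ, 0 ≤ x.2 ∧ energy B I (y j) ≤ energy B I (x.1 + x.2 • y j) ∧
      x.1 + x.2 • y j ∈ nehariPankovSet B V I' := by
    filter_upwards [hy.eventually (V.closed_of_finiteDimensional.isOpen_compl.eventually_mem hu.1)]
      with j hj
    obtain ⟨w, hwj, hw⟩ := exists_mem_openHalfSpace_mem_nehariPankovSet hB hI hderiv hj
    have hle : energy B I (y j) ≤ energy B I w :=
      isMaxOn_openHalfSpace_of_mem_nehariPankovSet hB hP hw
        (openHalfSpace_eq_of_mem hwj ▸ self_mem_openHalfSpace)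
    obtain ⟨v, hv, t, ht, rfl⟩ := hwj
    exact ⟨(⟨v, hv⟩, t), ht.le, hle, hw⟩
  obtain ⟨x, hx⟩ := Filter.skolem.1 hproj
  exact ⟨x, tendsto_zero_one_of_energy_le hB hI hP hcont hu hy (hx.mono fun _ h => h.1)
    (hx.mono fun _ h => h.2.1), hx.mono fun _ h => h.2.2⟩

/- Moving a minimizer `u` in a descent direction `p` and projecting back to the Nehari–Pankov set
gives points `y + σp` with `y ∈ V ⊕ ℝ⁺u` close to `u`, so that `J(y + σp) < J(y) ≤ J(u)`. -/
lemma derivative_nonneg_of_isMinOn [FiniteDimensional ℝ V]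
    (hB : IsSplitForm B V) (hI : IsSuperquadratic I) (hP : PankovInequality I I')
    (hderiv : ∀ u, HasFDerivAt I (I' u) u) (hderiv_cont : Continuous I')
    (hu : u ∈ nehariPankovSet B V I') (hmin : IsMinOn (energy B I) (nehariPankovSet B V I') u)
    (p : X) : 0 ≤ B u p - I' u p := by
  by_contra! hp
  have hstrict : HasStrictFDerivAt (energy B I) (B u - I' u) u :=
    hasStrictFDerivAt_of_hasFDerivAt_of_continuousAt
      (.of_forall fun z => hasFDerivAt_energy hB.symm (hderiv z))
      (B.continuous.sub hderiv_cont).continuousAt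
  have hε : Tendsto (fun ε : ℝ => ε) (𝓝[>] 0) (𝓝 0) := nhdsWithin_le_nhds
  have hpert : Tendsto (fun ε : ℝ => u + ε • p) (𝓝[>] 0) (𝓝 u) := by
    simpa using (hε.smul_const p).const_add u
  obtain ⟨x, hx, hx_mem⟩ :=
    exists_tendsto_add_smul_mem_nehariPankovSet hB hI hP hderiv hu hpert
  have hfst : Tendsto (fun ε => ((x ε).1 : X)) (𝓝[>] 0) (𝓝 0) :=
    ((continuous_subtype_val.comp continuous_fst).tendsto (0, 1)).comp hx
  have hsnd : Tendsto (fun ε => (x ε).2) (𝓝[>] 0) (𝓝 1) :=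
    (continuous_snd.tendsto (0, 1)).comp hx
  have hsnd_pos : ∀ᶠ ε in 𝓝[>] 0, 0 < (x ε).2 := hsnd.eventually_const_lt one_pos
  have hbase : Tendsto (fun ε => ((x ε).1 : X) + (x ε).2 • u) (𝓝[>] 0) (𝓝 u) := by
    simpa using hfst.add (hsnd.smul_const u)
  have hstep : Tendsto (fun ε => (x ε).2 * ε) (𝓝[>] 0) (𝓝[>] 0) := by
    refine tendsto_nhdsWithin_iff.2 ⟨by simpa using hsnd.mul hε, ?_⟩
    filter_upwards [hsnd_pos, self_mem_nhdsWithin] with ε hx_pos hε_pos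
    exact mul_pos hx_pos hε_pos
  obtain ⟨ε, hdescent, hε_pos, hε_mem⟩ := (((hbase.prodMk hstep).eventually
    (eventually_add_smul_lt_of_hasStrictFDerivAt hstrict hp)).and (hsnd_pos.and hx_mem)).exists
  have hbase_le : energy B I ((x ε).1 + (x ε).2 • u) ≤ energy B I u :=
    energy_add_smul_le_of_mem_nehariPankovSet hB hP hu (x ε).1.2 hε_pos.le
  have hsplit : ((x ε).1 : X) + (x ε).2 • (u + ε • p) =
      (x ε).1 + (x ε).2 • u + ((x ε).2 * ε) • p := by module
  have hmin_le : energy B I u ≤ energy B I ((x ε).1 + (x ε).2 • (u + ε • p)) := hmin hε_mem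
  rw [hsplit] at hmin_le
  exact (hmin_le.trans_lt (hdescent.trans_le hbase_le)).false

theorem nehari_pankov_ground_states_general [CompleteSpace X] [FiniteDimensional ℝ V]
    (hB : IsSplitForm B V) (hV : V ≠ ⊤)
    (hderiv : ∀ u, HasFDerivAt I (I' u) u) (hderiv_cont : Continuous I')
    (hweak : WeaklySeqContinuous I) (hI : IsSuperquadratic I) (hP : PankovInequality I I') :
    (nehariPankovSet B V I').Nonempty ∧
    (∀ u ≠ 0, (∀ v, B u v - I' u v = 0) → u ∈ nehariPankovSet B V I') ∧
    sInf (energy B I '' nehariPankovSet B V I') =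
      sInf ((fun u => sSup (energy B I '' openHalfSpace V u)) '' {u | u ∉ V}) ∧
    0 < sInf (energy B I '' nehariPankovSet B V I') ∧
    (∃ u ∈ nehariPankovSet B V I',
      energy B I u = sInf (energy B I '' nehariPankovSet B V I')) ∧
    (∀ u ∈ nehariPankovSet B V I',
      energy B I u = sInf (energy B I '' nehariPankovSet B V I') →
      ∀ v, B u v - I' u v = 0) := by
  obtain ⟨u, hu, hmin⟩ := exists_isMinOn_nehariPankovSet hB hV hI hP hweak hderiv
  have hleast : IsLeast (energy B I '' nehariPankovSet B V I') (energy B I u) :=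
    ⟨mem_image_of_mem _ hu, forall_mem_image.2 hmin⟩
  rw [hleast.csInf_eq, image_sSup_energy_openHalfSpace hB hI hP hderiv]
  refine ⟨⟨u, hu⟩, fun u => mem_nehariPankovSet_of_critical hB hI hP, hleast.csInf_eq.symm,
    energy_pos_of_mem_nehariPankovSet hB hI hP hu, ⟨u, hu, rfl⟩, fun w hw hwu v => ?_⟩
  have hw_min : IsMinOn (energy B I) (nehariPankovSet B V I') w := fun y hy => by
    simpa only [hwu] using hmin hy
  have hneg := derivative_nonneg_of_isMinOn hB hI hP hderiv hderiv_cont hw hw_min (-v)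
  rw [map_neg, map_neg] at hneg
  linarith [derivative_nonneg_of_isMinOn hB hI hP hderiv hderiv_cont hw hw_min v]

end SplitForm

section DiagonalForm

open scoped NNReal lp

variable {ι X : Type*} [NormedAddCommGroup X] [InnerProductSpace ℝ X] (b : HilbertBasis ι ℝ X)
  {m : ι → ℝ} {K : ℝ≥0} (hm : ∀ i, ‖m i‖ ≤ K)

/-- The bounded bilinear form `∑ᵢ mᵢ ⟨bᵢ,u⟩ ⟨bᵢ,v⟩` with bounded symbol `m` in a Hilbert basis `b`,
obtained from the pairing of the coefficient sequences in `ℓ²`. -/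
noncomputable def diagonalForm : X →L[ℝ] X →L[ℝ] ℝ :=
  (lp.dualPairing 2 2 (fun i => m i • ContinuousLinearMap.mul ℝ ℝ) (K := K) fun i =>
    (ContinuousLinearMap.opNorm_smul_le (m i) (ContinuousLinearMap.mul ℝ ℝ)).trans
      (by simpa using hm i)).bilinearComp (b.repr : X →L[ℝ] ℓ²(ι, ℝ)) (b.repr : X →L[ℝ] ℓ²(ι, ℝ))

lemma diagonalForm_apply (u v : X) :
    diagonalForm b hm u v = ∑' i, m i * (⟪b i, u⟫_ℝ * ⟪b i, v⟫_ℝ) := by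
  simp [diagonalForm, lp.dualPairing_apply, b.repr_apply_apply]

lemma diagonalForm_comm (u v : X) : diagonalForm b hm u v = diagonalForm b hm v u := by
  simp only [diagonalForm_apply, mul_comm ⟪b _, u⟫_ℝ]

lemma hasSum_inner_sq (u : X) : HasSum (fun i => ⟪b i, u⟫_ℝ ^ 2) (‖u‖ ^ 2) := by
  simpa only [real_inner_comm (b _) u, real_inner_self_eq_norm_sq, ← sq] using
    b.hasSum_inner_mul_inner u u

lemma hasSum_diagonalForm_self (u : X) :
    HasSum (fun i => m i * ⟪b i, u⟫_ℝ ^ 2) (diagonalForm b hm u u) := by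
  have hsummable : Summable fun i => m i * ⟪b i, u⟫_ℝ ^ 2 := by
    refine ((hasSum_inner_sq b u).summable.mul_left (K : ℝ)).of_norm_bounded fun i => ?_
    rw [norm_mul, norm_pow, Real.norm_eq_abs ⟪b i, u⟫_ℝ, sq_abs]
    gcongr
    exact hm i
  simpa only [diagonalForm_apply, ← sq] using hsummable.hasSum

variable {b}

lemma diagonalForm_self_le {c : ℝ} {u : X} (h : ∀ i, ⟪b i, u⟫_ℝ ≠ 0 → m i ≤ c) :
    diagonalForm b hm u u ≤ c * ‖u‖ ^ 2 := by
  refine hasSum_le (fun i => ?_) (hasSum_diagonalForm_self b hm u)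
    ((hasSum_inner_sq b u).mul_left c)
  by_cases hi : ⟪b i, u⟫_ℝ = 0
  · simp [hi]
  · exact mul_le_mul_of_nonneg_right (h i hi) (sq_nonneg _)

lemma le_diagonalForm_self {c : ℝ} {u : X} (h : ∀ i, ⟪b i, u⟫_ℝ ≠ 0 → c ≤ m i) :
    c * ‖u‖ ^ 2 ≤ diagonalForm b hm u u := by
  refine hasSum_le (fun i => ?_) ((hasSum_inner_sq b u).mul_left c)
    (hasSum_diagonalForm_self b hm u)
  by_cases hi : ⟪b i, u⟫_ℝ = 0
  · simp [hi]
  · exact mul_le_mul_of_nonneg_right (h i hi) (sq_nonneg _)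

lemma isSplitForm_diagonalForm {V : Submodule ℝ X} {S : Set ι} {c δ : ℝ} (hc : c < 0) (hδ : 0 < δ)
    (hS : ∀ i ∈ S, b i ∈ V ∧ m i ≤ c) (hSc : ∀ i ∉ S, b i ∈ Vᗮ ∧ δ ≤ m i) :
    IsSplitForm (diagonalForm b hm) V where
  symm := diagonalForm_comm b hm
  neg v hv hv_ne := by
    refine (diagonalForm_self_le hm (c := c) fun i hi => ?_).trans_lt
      (mul_neg_of_neg_of_pos hc (pow_pos (norm_pos_iff.2 hv_ne) 2))
    by_contra hmi
    exact hi (V.inner_left_of_mem_orthogonal hv (hSc i fun hiS => hmi (hS i hiS).2).1)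
  coercive := by
    refine ⟨δ, hδ, fun w hw => le_diagonalForm_self hm fun i hi => ?_⟩
    by_contra hmi
    have hiS : i ∈ S := by
      by_contra hiS
      exact hmi (hSc i hiS).2
    exact hi (hw (b i) (hS i hiS).1)

end DiagonalForm

section NormalizedBasis

variable {ι X : Type*} [NormedAddCommGroup X] [InnerProductSpace ℝ X] [CompleteSpace X]

lemma exists_hilbertBasis_eq_inv_norm_smul {ζ : ι → X} (hne : ∀ i, ζ i ≠ 0)
    (horth : Pairwise fun i j => ⟪ζ i, ζ j⟫_ℝ = 0)
    (hdense : (Submodule.span ℝ (range ζ)).topologicalClosure = ⊤) :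
    ∃ b : HilbertBasis ι ℝ X, ∀ i, b i = ‖ζ i‖⁻¹ • ζ i := by
  have hortho : Orthonormal ℝ fun i => ‖ζ i‖⁻¹ • ζ i :=
    ⟨fun i => norm_smul_inv_norm (hne i), fun i j hij => by
      simp only [real_inner_smul_left, real_inner_smul_right, horth hij, mul_zero]⟩
  have hspan : ⊤ ≤ (Submodule.span ℝ (range fun i => ‖ζ i‖⁻¹ • ζ i)).topologicalClosure := by
    rw [← hdense]
    refine Submodule.topologicalClosure_mono (Submodule.span_le.2 ?_)
    rintro _ ⟨i, rfl⟩
    rw [← smul_inv_smul₀ (norm_ne_zero_iff.2 (hne i)) (ζ i)]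
    exact Submodule.smul_mem _ _ (Submodule.subset_span (mem_range_self i))
  exact ⟨HilbertBasis.mk hortho hspan, fun i => by rw [HilbertBasis.coe_mk]⟩

end NormalizedBasis

section SpectralForm

open scoped NNReal

lemma norm_sub_div_one_add_le {x : ℝ} (hx : 0 ≤ x) (a : ℝ) :
    ‖(x - a) / (1 + x)‖ ≤ (1 + ‖a‖₊ : ℝ≥0) := by
  have hx' : 0 < 1 + x := by positivity
  rw [norm_div, Real.norm_of_nonneg hx'.le, div_le_iff₀ hx']
  push_cast
  calc ‖x - a‖ ≤ x + ‖a‖ := (norm_sub_le x a).trans_eq (by rw [Real.norm_of_nonneg hx])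
    _ ≤ (1 + ‖a‖) * (1 + x) := by nlinarith [norm_nonneg a]

lemma sub_div_one_add_le_sub_div_one_add {x y a : ℝ} (hx : -1 < x) (hxy : x ≤ y) (ha : -1 ≤ a) :
    (x - a) / (1 + x) ≤ (y - a) / (1 + y) := by
  rw [div_le_div_iff₀ (by linarith) (by linarith)]
  nlinarith

lemma ne_zero_of_norm_sq_eq_one_add {X : Type*} [NormedAddCommGroup X] {x : X} {a : ℝ} (ha : 0 ≤ a)
    (hx : ‖x‖ ^ 2 = 1 + a) : x ≠ 0 := by
  rintro rfl
  simp only [norm_zero, ne_eq, two_ne_zero, not_false_eq_true, zero_pow] at hx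
  linarith

variable {X : Type*} [NormedAddCommGroup X] [InnerProductSpace ℝ X] {lam : ℕ → ℝ} {ζ : ℕ → X}
  {lambda : ℝ} {n : ℕ}

lemma qForm_eq_diagonalForm (hnorm : ∀ k, ‖ζ k‖ ^ 2 = 1 + lam k) (b : HilbertBasis ℕ ℝ X)
    (hb : ∀ k, b k = ‖ζ k‖⁻¹ • ζ k) {K : ℝ≥0} (hm : ∀ k, ‖(lam k - lambda) / (1 + lam k)‖ ≤ K)
    (u v : X) : qForm lam ζ lambda u v = diagonalForm b hm u v := by
  rw [diagonalForm_apply]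
  refine tsum_congr fun k => ?_
  rw [coefH, coefH, hb, real_inner_smul_left, real_inner_smul_left, real_inner_comm u,
    real_inner_comm v, ← hnorm]
  ring

lemma mem_orthogonal_Esub (horth : Pairwise fun j k => ⟪ζ j, ζ k⟫_ℝ = 0) {k : ℕ} (hk : n < k) :
    ζ k ∈ (Esub ζ n)ᗮ := by
  have hle : Esub ζ n ≤ (Submodule.span ℝ {ζ k})ᗮ := by
    refine Submodule.span_le.2 ?_
    rintro _ ⟨j, hj, rfl⟩
    exact Submodule.mem_orthogonal_singleton_iff_inner_left.2 (horth (hj.trans_lt hk).ne)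
  exact fun v hv => Submodule.mem_orthogonal_singleton_iff_inner_left.1 (hle hv)

instance finiteDimensional_Esub : FiniteDimensional ℝ (Esub ζ n) :=
  FiniteDimensional.span_of_finite ℝ ((finite_Iic n).image ζ)

lemma Esub_ne_top (hne : ∀ k, ζ k ≠ 0) (horth : Pairwise fun j k => ⟪ζ j, ζ k⟫_ℝ = 0) :
    Esub ζ n ≠ ⊤ := by
  intro htop
  have hmem := mem_orthogonal_Esub horth n.lt_succ_self
  rw [htop, Submodule.top_orthogonal_eq_bot] at hmem
  exact hne _ hmem

lemma exists_isSplitForm_qForm [CompleteSpace X] (hlam_mono : Monotone lam)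
    (hlam_nonneg : ∀ k, 0 ≤ lam k) (hnorm : ∀ k, ‖ζ k‖ ^ 2 = 1 + lam k)
    (horth : Pairwise fun j k => ⟪ζ j, ζ k⟫_ℝ = 0)
    (hdense : (Submodule.span ℝ (range ζ)).topologicalClosure = ⊤)
    (hlambda : lambda ∈ Ioo (lam n) (lam (n + 1))) :
    ∃ B : X →L[ℝ] X →L[ℝ] ℝ, IsSplitForm B (Esub ζ n) ∧
      qForm lam ζ lambda = fun u v => B u v := by
  have hpos : ∀ k, 0 < 1 + lam k := fun k => by linarith [hlam_nonneg k]
  have hne : ∀ k, ζ k ≠ 0 := fun k => ne_zero_of_norm_sq_eq_one_add (hlam_nonneg k) (hnorm k)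
  obtain ⟨b, hb⟩ := exists_hilbertBasis_eq_inv_norm_smul hne horth hdense
  have hm := fun k => norm_sub_div_one_add_le (hlam_nonneg k) lambda
  have hsymbol_mono : Monotone fun k => (lam k - lambda) / (1 + lam k) := fun j k hjk =>
    sub_div_one_add_le_sub_div_one_add (by linarith [hlam_nonneg j]) (hlam_mono hjk)
      (by linarith [hlam_nonneg n, hlambda.1])
  refine ⟨diagonalForm b hm, ?_, funext₂ (qForm_eq_diagonalForm hnorm b hb hm)⟩
  refine isSplitForm_diagonalForm hm (S := Iic n)
    (div_neg_of_neg_of_pos (sub_neg.2 hlambda.1) (hpos n))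
    (div_pos (sub_pos.2 hlambda.2) (hpos (n + 1))) (fun k hk => ⟨?_, hsymbol_mono hk⟩)
    fun k hk => ⟨?_, hsymbol_mono (Nat.succ_le_of_lt (not_le.1 hk))⟩
  · rw [hb]
    exact Submodule.smul_mem _ _ (Submodule.subset_span (mem_image_of_mem ζ hk))
  · rw [hb]
    exact Submodule.smul_mem _ _ (mem_orthogonal_Esub horth (not_le.1 hk))

end SpectralForm

/-- The Nehari–Pankov set is nonempty, contains every nonzero critical point
of `J_λ`; `c_λ = inf_{NP_λ} J_λ = inf_{u ∉ E_n} sup_{F_n(u)⁺} J_λ > 0`, the infimum over `NP_λ`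
is attained, and every minimizer of `J_λ` on `NP_λ` is a critical point of `J_λ`. -/
theorem nehari_pankov_ground_states {E : Type*} [NormedAddCommGroup E]
    [InnerProductSpace ℝ E] [CompleteSpace E]
    (lam : ℕ → ℝ) (ζ : ℕ → E)
    (hlam_mono : Monotone lam) (hlam_nonneg : ∀ k, 0 ≤ lam k)
    (hlam_top : Tendsto lam atTop atTop)
    (hON : ∀ j k, ⟪ζ j, ζ k⟫_ℝ = if j = k then 1 + lam k else 0)
    (hdense : (Submodule.span ℝ (Set.range ζ)).topologicalClosure = ⊤)
    (I : E → ℝ) (I' : E → E →L[ℝ] ℝ)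
    (hIderiv : ∀ u, HasFDerivAt I (I' u) u) (hIderiv_cont : Continuous I')
    (hI1 : ∀ (u : ℕ → E) (a : E),
      (∀ φ : E →L[ℝ] ℝ, Tendsto (fun j => φ (u j)) atTop (𝓝 (φ a))) →
      Tendsto (fun j => I (u j)) atTop (𝓝 (I a)))
    (hI2 : I 0 = 0 ∧ ∀ u : E, u ≠ 0 → 0 < I u)
    (hI3mono : ∀ u : E, u ≠ 0 → MonotoneOn (fun t : ℝ => I (t • u) / t ^ 2) (Ioi 0))
    (hI3zero : ∀ u : E, u ≠ 0 → Tendsto (fun t : ℝ => I (t • u) / t ^ 2) (𝓝[>] 0) (𝓝 0))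
    (hI3top : ∀ u : E, u ≠ 0 → Tendsto (fun t : ℝ => I (t • u) / t ^ 2) atTop atTop)
    (hI4 : ∀ u : E, u ≠ 0 → ∀ v : E, ∀ s : ℝ, -1 ≤ s →
      I u - I ((1 + s) • u + v) + I' u ((s * (s / 2 + 1)) • u + (1 + s) • v) ≤ 0)
    (hI4strict : ∀ u : E, u ≠ 0 → ∀ s : ℝ, -1 ≤ s → s ≠ 0 →
      I u - I ((1 + s) • u) + I' u ((s * (s / 2 + 1)) • u) < 0)
    (n : ℕ)
    (lambda : ℝ) (hlambda : lambda ∈ Ioo (lam n) (lam (n + 1))) :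
    (NehariPankov lam ζ I' n lambda).Nonempty ∧
    (∀ u : E, u ≠ 0 → (∀ v : E, Jderiv lam ζ I' lambda u v = 0) →
      u ∈ NehariPankov lam ζ I' n lambda) ∧
    clevel lam ζ I I' n lambda =
      sInf ((fun u => sSup (Jfun lam ζ I lambda '' FsubPlus ζ n u)) ''
        {u : E | u ∉ Esub ζ n}) ∧
    0 < clevel lam ζ I I' n lambda ∧
    (∃ u ∈ NehariPankov lam ζ I' n lambda,
      Jfun lam ζ I lambda u = clevel lam ζ I I' n lambda) ∧
    (∀ u ∈ NehariPankov lam ζ I' n lambda,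
      Jfun lam ζ I lambda u = clevel lam ζ I I' n lambda →
      ∀ v : E, Jderiv lam ζ I' lambda u v = 0) := by
  have hnorm : ∀ k, ‖ζ k‖ ^ 2 = 1 + lam k := fun k => by
    rw [← real_inner_self_eq_norm_sq, hON, if_pos rfl]
  have hne : ∀ k, ζ k ≠ 0 := fun k => ne_zero_of_norm_sq_eq_one_add (hlam_nonneg k) (hnorm k)
  have horth : Pairwise fun j k => ⟪ζ j, ζ k⟫_ℝ = 0 := fun j k hjk => (hON j k).trans (if_neg hjk)
  obtain ⟨B, hB, hq⟩ :=
    exists_isSplitForm_qForm hlam_mono hlam_nonneg hnorm horth hdense hlambda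
  have hJ : Jfun lam ζ I lambda = energy B I := by
    funext u
    simp only [Jfun, energy, hq]
  have hNP : NehariPankov lam ζ I' n lambda = nehariPankovSet B (Esub ζ n) I' := by
    simp only [NehariPankov, nehariPankovSet, Jderiv, Fsub, hq]
  simp only [clevel, hJ, hNP, Jderiv, hq]
  exact nehari_pankov_ground_states_general hB (Esub_ne_top hne horth) hIderiv hIderiv_cont hI1
    ⟨hI2.1, hI2.2, hI3mono, hI3zero, hI3top⟩ ⟨hI4, hI4strict⟩
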